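/- arXiv:2105.09960 — 3 statements merged into one kernel-verified Lean document; each statement's English description precedes it below -/
import Mathlib

section
/- Let Λ be a finite set of sites with Hilbert space ℋ = ⊗_{x∈Λ} ℂ². Let H = ∑_{i<j} H_{ij} be a 2-local Hamiltonian, where each H_{ij} is an operator supported exactly on the sites {i,j}: it acts as the identity on all sites outside {i,j} and its partial trace over site i and its partial trace over site j both vanish. Then for every nonzero operator O on ℋ with operator norm ‖O‖_∞ ≤ 1, one has ‖HO‖_F ≤ 2e · ‖H‖_(2) · ‖O‖_F · (|ln ‖O‖_F| + 1). -/
open scoped Kronecker Matrix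

/-- The operator norm (largest singular value) of a complex matrix. -/
noncomputable def opNorm {n : Type*} [Fintype n] [DecidableEq n] (A : Matrix n n ℂ) : ℝ :=
  ‖Matrix.toEuclideanCLM (𝕜 := ℂ) A‖

/-- The normalized Frobenius norm `‖A‖_F = √(Tr(AᴴA)/Tr(I))`. -/
noncomputable def fnorm {n : Type*} [Fintype n] (A : Matrix n n ℂ) : ℝ :=
  Real.sqrt ((Aᴴ * A).trace.re / (Fintype.card n))

/-- An operator on the qubits labelled by `ι` is supported on the set `S` of sites if it is
(after reindexing along the tensor-factorization of the configuration space) of the form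
`B ⊗ 1`, i.e. it acts as the identity on all sites outside `S`. -/
def SupportedOn {ι : Type*} [Fintype ι] [DecidableEq ι] (S : Finset ι)
    (A : Matrix (ι → Fin 2) (ι → Fin 2) ℂ) : Prop :=
  ∃ B : Matrix ({x : ι // x ∈ S} → Fin 2) ({x : ι // x ∈ S} → Fin 2) ℂ,
    A = Matrix.reindex (Equiv.piEquivPiSubtypeProd (· ∈ S) fun _ => Fin 2).symm
          (Equiv.piEquivPiSubtypeProd (· ∈ S) fun _ => Fin 2).symm
          (B ⊗ₖ (1 : Matrix ({x : ι // ¬ x ∈ S} → Fin 2) ({x : ι // ¬ x ∈ S} → Fin 2) ℂ))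

/-- The partial trace of `A` over the qubit at site `x` vanishes. -/
def TracelessAt {ι : Type*} [Fintype ι] [DecidableEq ι] (x : ι)
    (A : Matrix (ι → Fin 2) (ι → Fin 2) ℂ) : Prop :=
  ∀ f g : ι → Fin 2,
    ∑ v : Fin 2, A (Function.update f x v) (Function.update g x v) = 0


open Matrix in
lemma fs_spec {N : Type*} [Fintype N] [DecidableEq N] {A : Matrix N N ℂ} (hA : A.IsHermitian) :
    ∃ (U : Matrix N N ℂ) (a : N → ℝ), Uᴴ * U = 1 ∧ U * Uᴴ = 1 ∧
      ∀ k : ℕ, A ^ k = U * diagonal (fun i => ((a i ^ k : ℝ) : ℂ)) * Uᴴ := by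
  have h1 : (hA.eigenvectorUnitary : Matrix N N ℂ)ᴴ * (hA.eigenvectorUnitary : Matrix N N ℂ) = 1 :=
    (Unitary.mem_iff.mp hA.eigenvectorUnitary.2).1
  have h2 : (hA.eigenvectorUnitary : Matrix N N ℂ) * (hA.eigenvectorUnitary : Matrix N N ℂ)ᴴ = 1 :=
    (Unitary.mem_iff.mp hA.eigenvectorUnitary.2).2
  have hs : A = (hA.eigenvectorUnitary : Matrix N N ℂ) *
      diagonal (fun i => ((hA.eigenvalues i : ℝ) : ℂ)) * (hA.eigenvectorUnitary : Matrix N N ℂ)ᴴ := by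
    have := hA.spectral_theorem
    rw [Unitary.conjStarAlgAut_apply] at this
    exact this
  generalize hA.eigenvalues = a at *
  generalize (hA.eigenvectorUnitary : Matrix N N ℂ) = U at *
  refine ⟨U, a, h1, h2, fun k => ?_⟩
  induction k with
  | zero => simp [h2]
  | succ k ih =>
    rw [pow_succ, ih]
    conv_lhs => rw [hs]
    have : U * diagonal (fun i => ((a i ^ k : ℝ) : ℂ)) * Uᴴ * (U * diagonal (fun i => (a i : ℂ)) * Uᴴ)
      = U * diagonal (fun i => ((a i ^ k : ℝ) : ℂ)) * (Uᴴ * U) * diagonal (fun i => (a i : ℂ)) * Uᴴ := by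
      simp only [Matrix.mul_assoc]
    rw [this, h1, Matrix.mul_one, Matrix.mul_assoc U, diagonal_mul_diagonal]
    congr 3
    ext i
    push_cast
    ring_nf

open Matrix in
lemma fs_overlap {N : Type*} [Fintype N] [DecidableEq N] {A B : Matrix N N ℂ}
    (hA : A.IsHermitian) (hB : B.IsHermitian) :
    ∃ (a b : N → ℝ) (w : N → N → ℝ), (∀ k l, 0 ≤ w k l) ∧ (∀ k, ∑ l, w k l = 1) ∧
      (∀ l, ∑ k, w k l = 1) ∧
      ∀ i j : ℕ, (A ^ i * B ^ j).trace = ((∑ k, ∑ l, a k ^ i * b l ^ j * w k l : ℝ) : ℂ) := by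
  obtain ⟨U, a, hU1, hU2, hUA⟩ := fs_spec hA
  obtain ⟨V, b, hV1, hV2, hVB⟩ := fs_spec hB
  have hW1 : (Uᴴ * V) * (Uᴴ * V)ᴴ = 1 := by
    rw [conjTranspose_mul, conjTranspose_conjTranspose]
    calc Uᴴ * V * (Vᴴ * U) = Uᴴ * (V * Vᴴ) * U := by simp only [Matrix.mul_assoc]
      _ = 1 := by rw [hV2, Matrix.mul_one, hU1]
  have hW2 : (Uᴴ * V)ᴴ * (Uᴴ * V) = 1 := by
    rw [conjTranspose_mul, conjTranspose_conjTranspose]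
    calc Vᴴ * U * (Uᴴ * V) = Vᴴ * (U * Uᴴ) * V := by simp only [Matrix.mul_assoc]
      _ = 1 := by rw [hU2, Matrix.mul_one, hV1]
  refine ⟨a, b, fun k l => Complex.normSq ((Uᴴ * V) k l), fun k l => Complex.normSq_nonneg _,
    fun k => ?_, fun l => ?_, fun i j => ?_⟩
  · have := congrFun (congrFun hW1 k) k
    rw [Matrix.mul_apply] at this
    simp only [conjTranspose_apply, Complex.star_def, Complex.mul_conj, one_apply_eq] at this
    exact_mod_cast this
  · have := congrFun (congrFun hW2 l) l
    rw [Matrix.mul_apply] at this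
    simp only [conjTranspose_apply, Complex.star_def, mul_comm, Complex.mul_conj, one_apply_eq] at this
    exact_mod_cast this
  · have : (A ^ i * B ^ j).trace = (diagonal (fun k => ((a k ^ i : ℝ) : ℂ)) * (Uᴴ * V) *
        (diagonal (fun k => ((b k ^ j : ℝ) : ℂ)) * (Uᴴ * V)ᴴ)).trace := by
      rw [hUA, hVB, conjTranspose_mul, conjTranspose_conjTranspose, Matrix.mul_assoc, Matrix.mul_assoc,
        Matrix.trace_mul_comm]
      simp only [Matrix.mul_assoc]
    rw [this]
    simp only [Matrix.trace, diag_apply, Matrix.mul_apply (M := _ * _) , diagonal_mul, conjTranspose_apply]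
    push_cast
    refine Finset.sum_congr rfl fun k _ => Finset.sum_congr rfl fun l _ => ?_
    rw [← Complex.mul_conj, Complex.star_def]
    ring

lemma fs_pow_rearr {u v : ℝ} {i j q : ℕ} (h : i + j = 2 * q) :
    u ^ i * v ^ j + v ^ i * u ^ j ≤ u ^ (2 * q) + v ^ (2 * q) := by
  have key : ∀ x y : ℝ, 0 ≤ x → 0 ≤ y → x ^ i * y ^ j + y ^ i * x ^ j ≤ x ^ (2 * q) + y ^ (2 * q) := by
    intro x y hx hy
    have : 0 ≤ (x ^ i - y ^ i) * (x ^ j - y ^ j) := by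
      rcases le_total x y with hxy | hxy
      · exact mul_nonneg_of_nonpos_of_nonpos (sub_nonpos.2 (pow_le_pow_left₀ hx hxy _))
          (sub_nonpos.2 (pow_le_pow_left₀ hx hxy _))
      · exact mul_nonneg (sub_nonneg.2 (pow_le_pow_left₀ hy hxy _))
          (sub_nonneg.2 (pow_le_pow_left₀ hy hxy _))
    rw [← h, pow_add, pow_add]
    nlinarith
  have h2 := key |u| |v| (abs_nonneg _) (abs_nonneg _)
  have e : ∀ x : ℝ, |x| ^ (2 * q) = x ^ (2 * q) := fun x => by rw [pow_mul, sq_abs, pow_mul]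
  rw [e, e] at h2
  refine le_trans (add_le_add ?_ ?_) h2
  · rw [← abs_pow, ← abs_pow, ← abs_mul]; exact le_abs_self _
  · rw [← abs_pow, ← abs_pow, ← abs_mul]; exact le_abs_self _

open Matrix in
lemma fs_quad {N : Type*} [Fintype N] [DecidableEq N] {A Y : Matrix N N ℂ}
    (hA : A.IsHermitian) (hY : Y.IsHermitian) {i j q : ℕ} (h : i + j = 2 * q) :
    (A ^ i * Y * A ^ j * Y).trace.re ≤ (A ^ (2 * q) * Y ^ 2).trace.re := by
  obtain ⟨U, a, hU1, hU2, hUA⟩ := fs_spec hA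
  set Z := Uᴴ * Y * U with hZ
  have hZh : Zᴴ = Z := by
    simp only [hZ, conjTranspose_mul, conjTranspose_conjTranspose, hY.eq, Matrix.mul_assoc]
  have gen : ∀ i j : ℕ, (A ^ i * Y * A ^ j * Y).trace.re
      = ∑ k, ∑ l, a k ^ i * a l ^ j * Complex.normSq (Z k l) := by
    intro i j
    have : (A ^ i * Y * A ^ j * Y).trace = (diagonal (fun k => ((a k ^ i : ℝ) : ℂ)) * Z *
        (diagonal (fun k => ((a k ^ j : ℝ) : ℂ)) * Z)).trace := by
      rw [hUA, hUA, hZ, Matrix.mul_assoc, Matrix.mul_assoc, Matrix.mul_assoc, Matrix.mul_assoc,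
        Matrix.trace_mul_comm]
      simp only [Matrix.mul_assoc]
    have h3 : (A ^ i * Y * A ^ j * Y).trace
        = ((∑ k, ∑ l, a k ^ i * a l ^ j * Complex.normSq (Z k l) : ℝ) : ℂ) := by
      rw [this]
      simp only [Matrix.trace, diag_apply, Matrix.mul_apply (M := _ * _) , diagonal_mul]
      push_cast
      refine Finset.sum_congr rfl fun k _ => Finset.sum_congr rfl fun l _ => ?_
      have : Z l k = star (Z k l) := by
        conv_lhs => rw [← hZh]
        rfl
      rw [← Complex.mul_conj, this, Complex.star_def]
      ring
    rw [h3, Complex.ofReal_re]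
  have e : (A ^ (2 * q) * Y ^ 2).trace.re = (A ^ (2 * q) * Y * A ^ 0 * Y).trace.re := by
    rw [pow_zero, Matrix.mul_one, pow_two, Matrix.mul_assoc]
  have nsymm : ∀ k l, Complex.normSq (Z k l) = Complex.normSq (Z l k) := by
    intro k l
    conv_lhs => rw [← hZh]
    rw [conjTranspose_apply, Complex.star_def, Complex.normSq_conj]
  rw [e, gen, gen]
  have s : ∀ i j : ℕ, 2 * ∑ k, ∑ l, a k ^ i * a l ^ j * Complex.normSq (Z k l)
      = ∑ k, ∑ l, (a k ^ i * a l ^ j + a l ^ i * a k ^ j) * Complex.normSq (Z k l) := by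
    intro i j
    rw [two_mul]
    conv_lhs => arg 2; rw [Finset.sum_comm]
    rw [← Finset.sum_add_distrib]
    refine Finset.sum_congr rfl fun k _ => ?_
    rw [← Finset.sum_add_distrib]
    refine Finset.sum_congr rfl fun l _ => ?_
    rw [nsymm l k]; ring
  have := s i j
  have := s (2 * q) 0
  have : ∑ k, ∑ l, (a k ^ i * a l ^ j + a l ^ i * a k ^ j) * Complex.normSq (Z k l)
    ≤ ∑ k, ∑ l, (a k ^ (2 * q) * a l ^ 0 + a l ^ (2 * q) * a k ^ 0) * Complex.normSq (Z k l) := by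
    refine Finset.sum_le_sum fun k _ => Finset.sum_le_sum fun l _ => ?_
    refine mul_le_mul_of_nonneg_right ?_ (Complex.normSq_nonneg _)
    simpa using fs_pow_rearr h
  linarith

lemma fs_even_nonneg {N : Type*} [Fintype N] [DecidableEq N] {A : Matrix N N ℂ}
    (hA : A.IsHermitian) (m : ℕ) : 0 ≤ (A ^ (2 * m)).trace.re := by
  obtain ⟨a, b, w, hw, hr, hc, h⟩ := fs_overlap hA hA
  have := h (2 * m) 0
  rw [pow_zero, mul_one] at this
  rw [this, Complex.ofReal_re]
  refine Finset.sum_nonneg fun k _ => Finset.sum_nonneg fun l _ => ?_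
  have : 0 ≤ a k ^ (2 * m) := by rw [pow_mul]; positivity
  have := hw k l
  positivity

lemma fs_even_pos {N : Type*} [Fintype N] [DecidableEq N] {A : Matrix N N ℂ}
    (hA : A.IsHermitian) (h0 : A ≠ 0) (m : ℕ) : 0 < (A ^ (2 * m)).trace.re := by
  obtain ⟨U, a, hU1, hU2, hUA⟩ := fs_spec hA
  have tr : ∀ k, (A ^ k).trace = ((∑ i, a i ^ k : ℝ) : ℂ) := by
    intro k
    rw [hUA, Matrix.trace_mul_comm, ← Matrix.mul_assoc, hU1, Matrix.one_mul, Matrix.trace_diagonal]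
    push_cast; rfl
  rw [tr, Complex.ofReal_re]
  have hex : ∃ i, a i ≠ 0 := by
    by_contra hcon
    push Not at hcon
    apply h0
    have := hUA 1
    simpa [hcon] using this
  obtain ⟨i, hi⟩ := hex
  refine Finset.sum_pos' (fun k _ => ?_) ⟨i, Finset.mem_univ _, ?_⟩
  · rw [pow_mul]; positivity
  · rw [pow_mul]; positivity

lemma fs_holder {N : Type*} [Fintype N] [DecidableEq N] {A Y : Matrix N N ℂ}
    (hA : A.IsHermitian) (hY : Y.IsHermitian) (q : ℕ) :
    (A ^ (2 * q) * Y ^ 2).trace.re ≤ (A ^ (2 * (q + 1))).trace.re ^ (1 - ((q + 1 : ℕ) : ℝ)⁻¹) *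
      (Y ^ (2 * (q + 1))).trace.re ^ (((q + 1 : ℕ) : ℝ)⁻¹) := by
  rcases Nat.eq_zero_or_pos q with rfl | hq
  · simp
  obtain ⟨a, b, w, hw, hr, hc, h⟩ := fs_overlap hA hY
  have hAt : (A ^ (2 * (q + 1))).trace.re = ∑ x : N × N, a x.1 ^ (2 * (q + 1)) * w x.1 x.2 := by
    have := h (2 * (q + 1)) 0
    rw [pow_zero, mul_one] at this
    rw [this, Complex.ofReal_re, Fintype.sum_prod_type]
    simp
  have hYt : (Y ^ (2 * (q + 1))).trace.re = ∑ x : N × N, b x.2 ^ (2 * (q + 1)) * w x.1 x.2 := by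
    have := h 0 (2 * (q + 1))
    rw [pow_zero, one_mul] at this
    rw [this, Complex.ofReal_re, Fintype.sum_prod_type]
    simp
  have hAY : (A ^ (2 * q) * Y ^ 2).trace.re = ∑ x : N × N, a x.1 ^ (2 * q) * b x.2 ^ 2 * w x.1 x.2 := by
    rw [h, Complex.ofReal_re, Fintype.sum_prod_type]
  have hp : (1 : ℝ) ≤ ((q + 1 : ℕ) : ℝ) := by push_cast; linarith [(Nat.cast_nonneg q : (0 : ℝ) ≤ q)]
  have ev : ∀ (x : ℝ) (n : ℕ), 0 ≤ x ^ (2 * n) := fun x n => by rw [pow_mul]; positivity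
  have hin := Real.inner_le_weight_mul_Lp_of_nonneg (Finset.univ : Finset (N × N)) hp
    (fun x => a x.1 ^ (2 * (q + 1)) * w x.1 x.2) (fun x => b x.2 ^ 2 / a x.1 ^ 2)
    (fun x => mul_nonneg (ev _ _) (hw _ _)) (fun x => by positivity)
  rw [hAt, hYt, hAY]
  have e1 : ∑ x : N × N, a x.1 ^ (2 * q) * b x.2 ^ 2 * w x.1 x.2
      = ∑ x : N × N, a x.1 ^ (2 * (q + 1)) * w x.1 x.2 * (b x.2 ^ 2 / a x.1 ^ 2) := by
    refine Finset.sum_congr rfl fun x _ => ?_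
    by_cases h0 : a x.1 = 0
    · simp [h0, hq.ne']
    · field_simp
      ring
  rw [e1]
  refine hin.trans (mul_le_mul_of_nonneg_left ?_ ?_)
  · refine Real.rpow_le_rpow ?_ (Finset.sum_le_sum fun x _ => ?_) (by positivity)
    · refine Finset.sum_nonneg fun x _ => mul_nonneg (mul_nonneg (ev _ _) (hw _ _)) (by positivity)
    · rw [Real.rpow_natCast]
      by_cases h0 : a x.1 = 0
      · have := mul_nonneg (ev (b x.2) (q + 1)) (hw x.1 x.2)
        simpa [h0] using this
      · rw [div_pow, ← pow_mul, ← pow_mul]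
        apply le_of_eq
        field_simp
  · exact Real.rpow_nonneg (Finset.sum_nonneg fun x _ => mul_nonneg (ev _ _) (hw _ _)) _

lemma fs_calc (φ φ' φ'' : ℝ → ℝ) (s C : ℝ) (hs : 0 < s) (hs1 : s ≤ 1)
    (h1 : ∀ t, HasDerivAt φ (φ' t) t) (h2 : ∀ t, HasDerivAt φ' (φ'' t) t)
    (hpos : ∀ t, 0 < φ t) (h0 : φ' 0 = 0) (hb : ∀ t, φ'' t ≤ C * φ t ^ (1 - s)) :
    φ 1 ^ s ≤ φ 0 ^ s + s * C / 2 := by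
  -- first the function ψ
  have hψ : ∀ t, HasDerivAt (fun t => φ' t * φ t ^ (s - 1) - C * t)
      (φ'' t * φ t ^ (s - 1) + φ' t * (φ' t * (s - 1) * φ t ^ (s - 1 - 1)) - C) t := by
    intro t
    have := ((h2 t).fun_mul ((h1 t).rpow_const (p := s - 1) (Or.inl (hpos t).ne'))).fun_sub
      ((hasDerivAt_id' t).const_mul C)
    simpa using this
  have anti1 : Antitone (fun t => φ' t * φ t ^ (s - 1) - C * t) := by
    refine antitone_of_deriv_nonpos (fun t => (hψ t).differentiableAt) fun t => ?_
    rw [(hψ t).deriv]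
    have a1 : φ'' t * φ t ^ (s - 1) ≤ C := by
      calc φ'' t * φ t ^ (s - 1) ≤ (C * φ t ^ (1 - s)) * φ t ^ (s - 1) :=
            mul_le_mul_of_nonneg_right (hb t) (Real.rpow_nonneg (hpos t).le _)
        _ = C := by
            rw [mul_assoc, ← Real.rpow_add (hpos t)]
            simp
    have a2 : φ' t * (φ' t * (s - 1) * φ t ^ (s - 1 - 1)) ≤ 0 := by
      have : 0 ≤ (φ' t) ^ 2 * (1 - s) * φ t ^ (s - 1 - 1) :=
        mul_nonneg (mul_nonneg (sq_nonneg _) (by linarith)) (Real.rpow_nonneg (hpos t).le _)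
      nlinarith
    linarith
  have hg : ∀ t, HasDerivAt (fun t => φ t ^ s - s * C / 2 * t ^ 2)
      (s * (φ' t * φ t ^ (s - 1) - C * t)) t := by
    intro t
    have := ((h1 t).rpow_const (p := s) (Or.inl (hpos t).ne')).fun_sub
      ((hasDerivAt_pow 2 t).const_mul (s * C / 2))
    refine this.congr_deriv ?_
    push_cast
    ring
  have anti2 : AntitoneOn (fun t => φ t ^ s - s * C / 2 * t ^ 2) (Set.Ici 0) := by
    refine antitoneOn_of_deriv_nonpos (convex_Ici 0)
      (fun t _ => (hg t).continuousAt.continuousWithinAt)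
      (fun t _ => (hg t).differentiableAt.differentiableWithinAt) fun t ht => ?_
    rw [(hg t).deriv]
    rw [interior_Ici] at ht
    have := anti1 (le_of_lt ht)
    simp only [h0, zero_mul, mul_zero, sub_zero] at this
    exact mul_nonpos_of_nonneg_of_nonpos hs.le this
  have := anti2 (Set.mem_Ici.2 le_rfl) (Set.mem_Ici.2 zero_le_one) zero_le_one
  simp only at this
  norm_num at this
  linarith

section
attribute [local instance] Matrix.linftyOpNormedRing Matrix.linftyOpNormedAlgebra

lemma fs_deriv_line {N : Type*} [Fintype N] [DecidableEq N] (X Y : Matrix N N ℂ) (n : ℕ) (t : ℝ) :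
    HasDerivAt (fun t : ℝ => (X + t • Y) ^ n)
      (∑ i ∈ Finset.range n, (X + t • Y) ^ (n.pred - i) * Y * (X + t • Y) ^ i) t := by
  have h : HasDerivAt (fun t : ℝ => X + t • Y) Y t := by
    have := ((hasDerivAt_id' t).smul_const Y).const_add X
    rw [one_smul] at this
    exact this
  exact h.fun_pow' n

noncomputable def fsTr (N : Type*) [Fintype N] [DecidableEq N] : Matrix N N ℂ →ₗ[ℝ] ℝ :=
  Complex.reLm.comp ((Matrix.traceLinearMap N ℂ ℂ).restrictScalars ℝ)

lemma fs_deriv1 {N : Type*} [Fintype N] [DecidableEq N] (X Y : Matrix N N ℂ) (n : ℕ) (t : ℝ) :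
    HasDerivAt (fun t : ℝ => ((X + t • Y) ^ n).trace.re)
      (n * ((X + t • Y) ^ (n - 1) * Y).trace.re) t := by
  have h := (LinearMap.toContinuousLinearMap (fsTr N)).hasFDerivAt.comp_hasDerivAt t
    (fs_deriv_line X Y n t)
  have e : fsTr N (∑ i ∈ Finset.range n, (X + t • Y) ^ (n.pred - i) * Y * (X + t • Y) ^ i)
      = n * ((X + t • Y) ^ (n - 1) * Y).trace.re := by
    rw [map_sum, Finset.sum_congr rfl (g := fun _ => ((X + t • Y) ^ (n - 1) * Y).trace.re)]
    · simp
    · intro i hi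
      change Complex.re (Matrix.trace _) = _
      rw [Matrix.trace_mul_comm, ← Matrix.mul_assoc, ← pow_add]
      have := Finset.mem_range.1 hi
      rw [show i + (n.pred - i) = n - 1 by rw [Nat.pred_eq_sub_one]; omega]
  rw [← e]
  exact h

lemma fs_deriv2 {N : Type*} [Fintype N] [DecidableEq N] (X Y : Matrix N N ℂ) (n : ℕ) (t : ℝ) :
    HasDerivAt (fun t : ℝ => ((X + t • Y) ^ n * Y).trace.re)
      (∑ i ∈ Finset.range n, ((X + t • Y) ^ (n.pred - i) * Y * (X + t • Y) ^ i * Y).trace.re) t := by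
  have h := (LinearMap.toContinuousLinearMap (fsTr N)).hasFDerivAt.comp_hasDerivAt t
    ((fs_deriv_line X Y n t).mul_const Y)
  have e : fsTr N ((∑ i ∈ Finset.range n, (X + t • Y) ^ (n.pred - i) * Y * (X + t • Y) ^ i) * Y)
      = ∑ i ∈ Finset.range n, ((X + t • Y) ^ (n.pred - i) * Y * (X + t • Y) ^ i * Y).trace.re := by
    rw [Finset.sum_mul, map_sum]
    rfl
  rw [← e]
  exact h
end

/-- The square of the (unnormalized) Schatten `2m`-norm of a Hermitian matrix. -/
noncomputable def fsN {N : Type*} [Fintype N] [DecidableEq N] (m : ℕ) (A : Matrix N N ℂ) : ℝ :=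
  (A ^ (2 * m)).trace.re ^ ((m : ℝ)⁻¹)

lemma fsN_nonneg {N : Type*} [Fintype N] [DecidableEq N] (m : ℕ) {A : Matrix N N ℂ}
    (hA : A.IsHermitian) : 0 ≤ fsN m A := Real.rpow_nonneg (fs_even_nonneg hA m) _

lemma fsN_zero {N : Type*} [Fintype N] [DecidableEq N] (q : ℕ) :
    fsN (q + 1) (0 : Matrix N N ℂ) = 0 := by
  have : ((q + 1 : ℕ) : ℝ)⁻¹ ≠ 0 := by positivity
  rw [fsN, zero_pow (by omega), Matrix.trace_zero, Complex.zero_re, Real.zero_rpow this]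

lemma fs_smooth {N : Type*} [Fintype N] [DecidableEq N] {X Y : Matrix N N ℂ}
    (hX : X.IsHermitian) (hY : Y.IsHermitian) (q : ℕ)
    (h1 : (X ^ (2 * q + 1) * Y).trace = 0) (h2 : (X * Y).trace = 0) :
    fsN (q + 1) (X + Y) ≤ fsN (q + 1) X + (2 * q + 1) * fsN (q + 1) Y := by
  by_cases hX0 : X = 0
  · subst hX0
    rw [zero_add, fsN_zero, zero_add]
    have := fsN_nonneg (q + 1) hY
    nlinarith [(Nat.cast_nonneg q : (0 : ℝ) ≤ q)]
  have hH : ∀ t : ℝ, (X + t • Y).IsHermitian := fun t => by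
    refine hX.add ?_
    rw [Matrix.IsHermitian, Matrix.conjTranspose_smul, hY.eq, star_trivial]
  have hne : ∀ t : ℝ, X + t • Y ≠ 0 := by
    intro t ht
    have : (X ^ (2 * 1)).trace.re = 0 := by
      have h3 : (X * (X + t • Y)).trace = 0 := by rw [ht]; simp
      rw [Matrix.mul_add, Matrix.trace_add, Matrix.mul_smul, Matrix.trace_smul, h2, smul_zero,
        add_zero] at h3
      rw [mul_one, pow_two, h3, Complex.zero_re]
    exact (fs_even_pos hX hX0 1).ne' this
  have key := fs_calc (fun t => ((X + t • Y) ^ (2 * (q + 1))).trace.re)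
    (fun t => ((2 * (q + 1) : ℕ) : ℝ) * ((X + t • Y) ^ (2 * (q + 1) - 1) * Y).trace.re)
    (fun t => ((2 * (q + 1) : ℕ) : ℝ) * ∑ i ∈ Finset.range (2 * (q + 1) - 1),
      ((X + t • Y) ^ ((2 * (q + 1) - 1).pred - i) * Y * (X + t • Y) ^ i * Y).trace.re)
    (((q + 1 : ℕ) : ℝ)⁻¹) (((2 * (q + 1) : ℕ) : ℝ) * ((2 * q + 1) * fsN (q + 1) Y))
    (by positivity) (by
      apply inv_le_one_of_one_le₀
      push_cast; linarith [(Nat.cast_nonneg q : (0 : ℝ) ≤ q)])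
    (fun t => fs_deriv1 X Y _ t) (fun t => (fs_deriv2 X Y _ t).const_mul _)
    (fun t => fs_even_pos (hH t) (hne t) _) (by
      simp only [zero_smul, add_zero]
      rw [show 2 * (q + 1) - 1 = 2 * q + 1 by omega, h1]; simp)
    (by
      intro t
      rw [mul_assoc]
      refine mul_le_mul_of_nonneg_left ?_ (by positivity)
      have hle : ∀ i ∈ Finset.range (2 * (q + 1) - 1),
        ((X + t • Y) ^ ((2 * (q + 1) - 1).pred - i) * Y * (X + t • Y) ^ i * Y).trace.re
          ≤ ((X + t • Y) ^ (2 * (q + 1))).trace.re ^ (1 - ((q + 1 : ℕ) : ℝ)⁻¹) * fsN (q + 1) Y := by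
        intro i hi
        have := Finset.mem_range.1 hi
        refine (fs_quad (q := q) (hH t) hY ?_).trans (fs_holder (hH t) hY q)
        rw [Nat.pred_eq_sub_one]; omega
      refine (Finset.sum_le_sum hle).trans (le_of_eq ?_)
      rw [Finset.sum_const, Finset.card_range, nsmul_eq_mul, show 2 * (q + 1) - 1 = 2 * q + 1 by omega]
      push_cast
      ring)
  simp only [one_smul, zero_smul, add_zero] at key
  refine key.trans (le_of_eq ?_)
  rw [fsN]
  congr 1
  have : (q : ℝ) + 1 ≠ 0 := by positivity
  push_cast
  field_simp

/-- Independence of a site, described by a flip `σ` and a label `c`. -/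
def fsIndep {N : Type*} (σ : Equiv.Perm N) (c : N → Fin 2) (A : Matrix N N ℂ) : Prop :=
  (∀ a b, c a ≠ c b → A a b = 0) ∧ ∀ a b, A (σ a) (σ b) = A a b

/-- Vanishing partial trace. -/
def fsTl {N : Type*} (σ : Equiv.Perm N) (c : N → Fin 2) (A : Matrix N N ℂ) : Prop :=
  ∀ a b, c a = c b → A a b + A (σ a) (σ b) = 0

lemma fsIndep.mul {N : Type*} [Fintype N] [DecidableEq N] {σ : Equiv.Perm N} {c : N → Fin 2}
    {A B : Matrix N N ℂ} (hA : fsIndep σ c A) (hB : fsIndep σ c B) : fsIndep σ c (A * B) := by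
  refine ⟨fun a b hab => ?_, fun a b => ?_⟩
  · rw [Matrix.mul_apply]
    refine Finset.sum_eq_zero fun d _ => ?_
    by_cases h : c a = c d
    · rw [hB.1 d b (h ▸ hab), mul_zero]
    · rw [hA.1 a d h, zero_mul]
  · rw [Matrix.mul_apply, Matrix.mul_apply, ← Equiv.sum_comp σ]
    exact Finset.sum_congr rfl fun d _ => by rw [hA.2, hB.2]

lemma fsIndep.pow {N : Type*} [Fintype N] [DecidableEq N] {σ : Equiv.Perm N} {c : N → Fin 2}
    {A : Matrix N N ℂ} (hA : fsIndep σ c A) (k : ℕ) : fsIndep σ c (A ^ (k + 1)) := by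
  induction k with
  | zero => simpa using hA
  | succ k ih => rw [pow_succ]; exact ih.mul hA

lemma fsIndep.trace {N : Type*} [Fintype N] [DecidableEq N] {σ : Equiv.Perm N} {c : N → Fin 2}
    {A B : Matrix N N ℂ} (hA : fsIndep σ c A) (hB : fsTl σ c B) : (A * B).trace = 0 := by
  have e1 : (A * B).trace = ∑ a, ∑ b, A a b * B b a := by
    simp [Matrix.trace, Matrix.mul_apply]
  have e2 : (A * B).trace = ∑ a, ∑ b, A a b * B (σ b) (σ a) := by
    rw [e1, ← Equiv.sum_comp σ]
    refine Finset.sum_congr rfl fun a _ => ?_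
    rw [← Equiv.sum_comp σ]
    exact Finset.sum_congr rfl fun b _ => by rw [hA.2]
  have : (A * B).trace + (A * B).trace = 0 := by
    conv_lhs => arg 2; rw [e2]
    rw [e1, ← Finset.sum_add_distrib]
    refine Finset.sum_eq_zero fun a _ => ?_
    rw [← Finset.sum_add_distrib]
    refine Finset.sum_eq_zero fun b _ => ?_
    by_cases h : c a = c b
    · rw [← mul_add, hB b a h.symm, mul_zero]
    · rw [hA.1 a b h, zero_mul, zero_mul, add_zero]
  simpa using this

lemma fsIndep.sum {N ι : Type*} {σ : Equiv.Perm N} {c : N → Fin 2} (s : Finset ι)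
    {A : ι → Matrix N N ℂ} (hA : ∀ i ∈ s, fsIndep σ c (A i)) : fsIndep σ c (∑ i ∈ s, A i) := by
  refine ⟨fun a b hab => ?_, fun a b => ?_⟩
  · rw [Matrix.sum_apply]
    exact Finset.sum_eq_zero fun i hi => (hA i hi).1 a b hab
  · rw [Matrix.sum_apply, Matrix.sum_apply]
    exact Finset.sum_congr rfl fun i hi => (hA i hi).2 a b

lemma fsTl.sum {N ι : Type*} {σ : Equiv.Perm N} {c : N → Fin 2} (s : Finset ι)
    {A : ι → Matrix N N ℂ} (hA : ∀ i ∈ s, fsTl σ c (A i)) : fsTl σ c (∑ i ∈ s, A i) := by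
  intro a b hab
  rw [Matrix.sum_apply, Matrix.sum_apply, ← Finset.sum_add_distrib]
  exact Finset.sum_eq_zero fun i hi => hA i hi a b hab

lemma fs_herm_sum {N ι : Type*} (s : Finset ι)
    {A : ι → Matrix N N ℂ} (hA : ∀ i ∈ s, (A i).IsHermitian) : (∑ i ∈ s, A i).IsHermitian := by
  rw [Matrix.IsHermitian, Matrix.conjTranspose_sum]
  exact Finset.sum_congr rfl fun i hi => (hA i hi).eq

lemma fs_hyper {N Λ : Type*} [Fintype N] [DecidableEq N] [DecidableEq Λ]
    (σ : Λ → Equiv.Perm N) (c : Λ → N → Fin 2) (q : ℕ) (T : Finset Λ) :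
    ∀ (A : Finset Λ → Matrix N N ℂ), (∀ S, (A S).IsHermitian) →
      (∀ S ⊆ T, ∀ x ∈ T, x ∉ S → fsIndep (σ x) (c x) (A S)) →
      (∀ S ⊆ T, ∀ x ∈ S, fsTl (σ x) (c x) (A S)) →
      fsN (q + 1) (∑ S ∈ T.powerset, A S)
        ≤ ∑ S ∈ T.powerset, (2 * q + 1 : ℝ) ^ S.card * fsN (q + 1) (A S) := by
  induction T using Finset.induction_on with
  | empty => intro A _ _ _; simp
  | insert x T hx ih =>
    intro A hA hI hT
    rw [Finset.sum_powerset_insert hx, Finset.sum_powerset_insert hx]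
    have hI1 : fsIndep (σ x) (c x) (∑ S ∈ T.powerset, A S) := by
      refine fsIndep.sum _ fun S hS => ?_
      have hS := Finset.mem_powerset.1 hS
      exact hI S (hS.trans (Finset.subset_insert _ _)) x (Finset.mem_insert_self _ _)
        (fun h => hx (hS h))
    have hT1 : fsTl (σ x) (c x) (∑ S ∈ T.powerset, A (insert x S)) := by
      refine fsTl.sum _ fun S hS => ?_
      have hS := Finset.mem_powerset.1 hS
      exact hT _ (Finset.insert_subset_insert _ hS) x (Finset.mem_insert_self _ _)
    refine (fs_smooth (fs_herm_sum _ fun S _ => hA S) (fs_herm_sum _ fun S _ => hA _) q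
      ((hI1.pow _).trace hT1) (hI1.trace hT1)).trans ?_
    refine add_le_add ?_ ?_
    · exact ih A hA
        (fun S hS y hy hyS => hI S (hS.trans (Finset.subset_insert _ _)) y
          (Finset.mem_insert_of_mem hy) hyS)
        (fun S hS y hy => hT S (hS.trans (Finset.subset_insert _ _)) y hy)
    · have := ih (fun S => A (insert x S)) (fun S => hA _)
        (fun S hS y hy hyS => hI _ (Finset.insert_subset_insert _ hS) y
          (Finset.mem_insert_of_mem hy) (by
            rw [Finset.mem_insert]; rintro (rfl | h)
            · exact hx hy
            · exact hyS h))
        (fun S hS y hy => hT _ (Finset.insert_subset_insert _ hS) y (Finset.mem_insert_of_mem hy))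
      refine (mul_le_mul_of_nonneg_left this (by positivity)).trans (le_of_eq ?_)
      rw [Finset.mul_sum]
      refine Finset.sum_congr rfl fun S hS => ?_
      rw [Finset.card_insert_of_notMem (fun h => hx (Finset.mem_powerset.1 hS h)), pow_succ]
      ring

open Matrix in
/-- Hermitian dilation. -/
def fsDil {n : Type*} (h : Matrix n n ℂ) : Matrix (n ⊕ n) (n ⊕ n) ℂ := fromBlocks 0 h hᴴ 0

open Matrix in
lemma fsDil_herm {n : Type*} (h : Matrix n n ℂ) : (fsDil h).IsHermitian := by
  rw [Matrix.IsHermitian, fsDil, fromBlocks_conjTranspose]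
  simp

open Matrix in
lemma fsDil_sum {n ι : Type*} (s : Finset ι) (h : ι → Matrix n n ℂ) :
    fsDil (∑ i ∈ s, h i) = ∑ i ∈ s, fsDil (h i) := by
  ext a b
  rw [Matrix.sum_apply]
  rcases a with a | a <;> rcases b with b | b <;>
    simp [fsDil, Matrix.sum_apply, Matrix.conjTranspose_apply]

open Matrix in
lemma fsDil_pow {n : Type*} [Fintype n] [DecidableEq n] (h : Matrix n n ℂ) (m : ℕ) :
    (fsDil h) ^ (2 * m) = fromBlocks ((h * hᴴ) ^ m) 0 0 ((hᴴ * h) ^ m) := by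
  rw [pow_mul]
  have : fsDil h ^ 2 = fromBlocks (h * hᴴ) 0 0 (hᴴ * h) := by
    rw [pow_two, fsDil, fromBlocks_multiply]; simp
  rw [this]
  induction m with
  | zero => simp
  | succ m ih => rw [pow_succ, ih, fromBlocks_multiply]; simp [pow_succ]

open Matrix in
lemma fsDil_trace {n : Type*} [Fintype n] [DecidableEq n] (h : Matrix n n ℂ) (m : ℕ) :
    ((fsDil h) ^ (2 * m)).trace.re = 2 * ((hᴴ * h) ^ m).trace.re := by
  have etr : ∀ A D : Matrix n n ℂ, (fromBlocks A 0 0 D).trace = A.trace + D.trace := by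
    intro A D
    simp [Matrix.trace, Fintype.sum_sum_type]
  rw [fsDil_pow, etr]
  have : ((h * hᴴ) ^ m).trace = ((hᴴ * h) ^ m).trace := by
    cases m with
    | zero => simp
    | succ m =>
      have e : ∀ k, (h * hᴴ) ^ (k + 1) = h * ((hᴴ * h) ^ k * hᴴ) := by
        intro k
        induction k with
        | zero => simp
        | succ k ih =>
          rw [pow_succ, ih, pow_succ]; simp only [Matrix.mul_assoc]
      rw [e, Matrix.trace_mul_comm, Matrix.mul_assoc, ← pow_succ]
  rw [this, Complex.add_re]; ring

lemma opNorm_nonneg' {n : Type*} [Fintype n] [DecidableEq n] (A : Matrix n n ℂ) : 0 ≤ opNorm A :=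
  norm_nonneg _

lemma opNorm_mul' {n : Type*} [Fintype n] [DecidableEq n] (A B : Matrix n n ℂ) :
    opNorm (A * B) ≤ opNorm A * opNorm B := by
  unfold opNorm
  rw [map_mul]
  exact norm_mul_le _ _

open Matrix in
lemma opNorm_star' {n : Type*} [Fintype n] [DecidableEq n] (A : Matrix n n ℂ) :
    opNorm Aᴴ = opNorm A := by
  unfold opNorm
  rw [← Matrix.star_eq_conjTranspose, map_star]
  exact norm_star (E := EuclideanSpace ℂ n →L[ℂ] EuclideanSpace ℂ n) _

lemma opNorm_one' {n : Type*} [Fintype n] [DecidableEq n] : opNorm (1 : Matrix n n ℂ) ≤ 1 := by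
  unfold opNorm
  rw [map_one]
  exact ContinuousLinearMap.norm_id_le

open Matrix in
lemma opNorm_unitary' {n : Type*} [Fintype n] [DecidableEq n] {U : Matrix n n ℂ} (h : Uᴴ * U = 1) :
    opNorm U ≤ 1 := by
  have h1 : opNorm (Uᴴ * U) = opNorm U * opNorm U := by
    unfold opNorm
    rw [← Matrix.star_eq_conjTranspose, map_mul, map_star]
    exact CStarRing.norm_star_mul_self (E := EuclideanSpace ℂ n →L[ℂ] EuclideanSpace ℂ n)
  rw [h] at h1
  have := opNorm_one' (n := n)
  have := opNorm_nonneg' U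
  nlinarith

lemma opNorm_col {n : Type*} [Fintype n] [DecidableEq n] (A : Matrix n n ℂ) (k : n) :
    ∑ i, Complex.normSq (A i k) ≤ opNorm A ^ 2 := by
  have h := (Matrix.toEuclideanCLM (𝕜 := ℂ) A).le_opNorm (EuclideanSpace.single k 1)
  rw [PiLp.norm_single, norm_one, mul_one] at h
  have h2 := pow_le_pow_left₀ (norm_nonneg _) h 2
  rw [EuclideanSpace.norm_sq_eq] at h2
  refine le_trans (le_of_eq ?_) h2
  refine Finset.sum_congr rfl fun i _ => ?_
  rw [Matrix.ofLp_toEuclideanCLM, Complex.normSq_eq_norm_sq]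
  simp

lemma opNorm_trace {n : Type*} [Fintype n] [DecidableEq n] (A : Matrix n n ℂ) :
    A.trace.re ≤ Fintype.card n * opNorm A := by
  rw [Matrix.trace, Complex.re_sum]
  calc ∑ i, (A i i).re ≤ ∑ i : n, opNorm A := by
        refine Finset.sum_le_sum fun i _ => ?_
        have h1 : Complex.normSq (A i i) ≤ opNorm A ^ 2 :=
          (Finset.single_le_sum (f := fun j => Complex.normSq (A j i))
            (fun j _ => Complex.normSq_nonneg _) (Finset.mem_univ i)).trans (opNorm_col A i)
        rw [Complex.normSq_eq_norm_sq] at h1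
        exact (Complex.re_le_norm _).trans
          ((pow_le_pow_iff_left₀ (norm_nonneg _) (opNorm_nonneg' A) two_ne_zero).1 h1)
    _ = _ := by simp

open Matrix in
lemma fs_op_moment {n : Type*} [Fintype n] [DecidableEq n] (h : Matrix n n ℂ) (m : ℕ) :
    ((hᴴ * h) ^ m).trace.re ≤ Fintype.card n * (opNorm h ^ 2) ^ m := by
  refine (opNorm_trace _).trans (mul_le_mul_of_nonneg_left ?_ (Nat.cast_nonneg _))
  induction m with
  | zero => simpa using opNorm_one'
  | succ m ih =>
    rw [pow_succ, pow_succ]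
    refine (opNorm_mul' _ _).trans (mul_le_mul ih ?_ (opNorm_nonneg' _) (by positivity))
    refine (opNorm_mul' _ _).trans (le_of_eq ?_)
    rw [opNorm_star', pow_two]

open Matrix in
lemma fs_final {n : Type*} [Fintype n] [DecidableEq n] (H O : Matrix n n ℂ) (hO : opNorm O ≤ 1)
    (m : ℕ) (hm : 1 ≤ m) :
    ((H * O)ᴴ * (H * O)).trace.re ≤ (Oᴴ * O).trace.re ^ (1 - (m : ℝ)⁻¹) *
      ((Hᴴ * H) ^ m).trace.re ^ ((m : ℝ)⁻¹) := by
  obtain ⟨U, a, hU1, hU2, hUA⟩ := fs_spec (Matrix.isHermitian_conjTranspose_mul_self H)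
  set C := Oᴴ * U with hC
  set r : n → ℝ := fun k => ∑ i, Complex.normSq (C i k) with hr
  have hr0 : ∀ k, 0 ≤ r k := fun k => Finset.sum_nonneg fun i _ => Complex.normSq_nonneg _
  have hr1 : ∀ k, r k ≤ 1 := by
    intro k
    refine (opNorm_col C k).trans ?_
    have h1 : opNorm C ≤ 1 := by
      refine (opNorm_mul' _ _).trans ?_
      rw [opNorm_star']
      have := opNorm_unitary' hU1
      exact mul_le_one₀ hO (opNorm_nonneg' _) this
    exact pow_le_one₀ (opNorm_nonneg' _) h1
  have hCC : ∀ (B : Matrix n n ℂ) k, (Bᴴ * B) k k = ((∑ i, Complex.normSq (B i k) : ℝ) : ℂ) := by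
    intro B k
    rw [Matrix.mul_apply]
    push_cast
    refine Finset.sum_congr rfl fun i _ => ?_
    rw [conjTranspose_apply, Complex.star_def, mul_comm, Complex.mul_conj]
  have ha : ∀ k, 0 ≤ a k := by
    intro k
    have h1 : (H * U)ᴴ * (H * U) = diagonal (fun i => ((a i ^ 1 : ℝ) : ℂ)) := by
      have := hUA 1
      rw [pow_one] at this
      calc (H * U)ᴴ * (H * U) = Uᴴ * (Hᴴ * H) * U := by
            rw [conjTranspose_mul]; simp only [Matrix.mul_assoc]
        _ = (Uᴴ * U) * diagonal (fun i => ((a i ^ 1 : ℝ) : ℂ)) * (Uᴴ * U) := by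
            rw [this]; simp only [Matrix.mul_assoc]
        _ = _ := by rw [hU1, Matrix.one_mul, Matrix.mul_one]
    have h2 := congrFun (congrFun h1 k) k
    rw [hCC, diagonal_apply_eq, pow_one] at h2
    have h3 := Complex.ofReal_injective h2
    rw [← h3]
    exact Finset.sum_nonneg fun i _ => Complex.normSq_nonneg _
  have e1 : ((H * O)ᴴ * (H * O)).trace.re = ∑ k, r k * a k := by
    have : ((H * O)ᴴ * (H * O)).trace = (diagonal (fun i => ((a i ^ 1 : ℝ) : ℂ)) * (Cᴴ * C)).trace := by
      have h1 := hUA 1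
      rw [pow_one] at h1
      calc ((H * O)ᴴ * (H * O)).trace = (Oᴴ * ((Hᴴ * H) * O)).trace := by
            rw [conjTranspose_mul]; simp only [Matrix.mul_assoc]
        _ = ((Hᴴ * H) * (O * Oᴴ)).trace := by rw [Matrix.trace_mul_comm]; simp only [Matrix.mul_assoc]
        _ = (U * (diagonal (fun i => ((a i ^ 1 : ℝ) : ℂ)) * (Uᴴ * (O * Oᴴ)))).trace := by
            rw [h1]; simp only [Matrix.mul_assoc]
        _ = _ := by
            rw [Matrix.trace_mul_comm, hC, conjTranspose_mul, conjTranspose_conjTranspose]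
            simp only [Matrix.mul_assoc]
    rw [this, Matrix.trace, Complex.re_sum]
    refine Finset.sum_congr rfl fun k _ => ?_
    rw [diag_apply, diagonal_mul, hCC, pow_one, ← Complex.ofReal_mul, Complex.ofReal_re, mul_comm]
  have e2 : (Oᴴ * O).trace.re = ∑ k, r k := by
    have : (Oᴴ * O).trace = (Cᴴ * C).trace := by
      rw [hC, conjTranspose_mul, conjTranspose_conjTranspose, Matrix.mul_assoc,
        Matrix.trace_mul_comm Uᴴ, Matrix.mul_assoc, Matrix.mul_assoc, hU2, Matrix.mul_one,
        Matrix.trace_mul_comm]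
    rw [this, Matrix.trace, Complex.re_sum]
    refine Finset.sum_congr rfl fun k _ => ?_
    rw [diag_apply, hCC, Complex.ofReal_re]
  have e3 : ((Hᴴ * H) ^ m).trace.re = ∑ k, a k ^ m := by
    rw [hUA, Matrix.trace_mul_comm, ← Matrix.mul_assoc, hU1, Matrix.one_mul, Matrix.trace_diagonal,
      Complex.re_sum]
    simp only [Complex.ofReal_re]
  rw [e1, e2, e3]
  refine (Real.inner_le_weight_mul_Lp_of_nonneg Finset.univ (p := m) (by exact_mod_cast hm)
    r a hr0 ha).trans (mul_le_mul_of_nonneg_left ?_ ?_)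
  · refine Real.rpow_le_rpow (Finset.sum_nonneg fun k _ => mul_nonneg (hr0 k)
      (Real.rpow_nonneg (ha k) _)) (Finset.sum_le_sum fun k _ => ?_) (by positivity)
    rw [Real.rpow_natCast]
    exact mul_le_of_le_one_left (pow_nonneg (ha k) _) (hr1 k)
  · exact Real.rpow_nonneg (Finset.sum_nonneg fun k _ => hr0 k) _

/-- flip of the qubit at `x`. -/
def fsFlip {Λ : Type*} [DecidableEq Λ] (x : Λ) : Equiv.Perm (Λ → Fin 2) :=
  Function.Involutive.toPerm (fun f => Function.update f x (f x + 1)) (by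
    intro f
    ext y
    by_cases h : y = x
    · subst h
      simp only [Function.update_self]
      generalize f y = v
      revert v; decide
    · simp [h])

lemma fsFlip_apply {Λ : Type*} [DecidableEq Λ] (x : Λ) (f : Λ → Fin 2) :
    fsFlip x f = Function.update f x (f x + 1) := rfl

open Matrix in
lemma fs_dil_indep {n : Type*} {σ : Equiv.Perm n} {c : n → Fin 2} {A : Matrix n n ℂ}
    (h : fsIndep σ c A) : fsIndep (Equiv.sumCongr σ σ) (Sum.elim c c) (fsDil A) := by
  refine ⟨fun a b hab => ?_, fun a b => ?_⟩
  · rcases a with a | a <;> rcases b with b | b <;> simp only [Sum.elim_inl, Sum.elim_inr] at hab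
    · simp [fsDil]
    · simp [fsDil, h.1 a b hab]
    · simp [fsDil, h.1 b a hab.symm]
    · simp [fsDil]
  · rcases a with a | a <;> rcases b with b | b <;> simp [fsDil, h.2]

open Matrix in
lemma fs_dil_tl {n : Type*} {σ : Equiv.Perm n} {c : n → Fin 2} {A : Matrix n n ℂ}
    (h : fsTl σ c A) : fsTl (Equiv.sumCongr σ σ) (Sum.elim c c) (fsDil A) := by
  intro a b hab
  rcases a with a | a <;> rcases b with b | b <;> simp only [Sum.elim_inl, Sum.elim_inr] at hab
  · simp [fsDil]
  · simpa [fsDil] using h a b hab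
  · have := congrArg star (h b a hab.symm)
    simpa [fsDil] using this
  · simp [fsDil]

lemma fs_supp {Λ : Type*} [Fintype Λ] [DecidableEq Λ] {S : Finset Λ}
    {A : Matrix (Λ → Fin 2) (Λ → Fin 2) ℂ} (h : SupportedOn S A) {x : Λ} (hx : x ∉ S) :
    fsIndep (fsFlip x) (fun f => f x) A := by
  obtain ⟨B, rfl⟩ := h
  refine ⟨fun f g hfg => ?_, fun f g => ?_⟩
  · simp only [Matrix.reindex_apply, Equiv.symm_symm, Matrix.submatrix_apply,
      Matrix.kroneckerMap_apply, Matrix.one_apply]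
    rw [if_neg, mul_zero]
    intro h
    exact hfg (congrFun h ⟨x, hx⟩)
  · simp only [Matrix.reindex_apply, Equiv.symm_symm, Matrix.submatrix_apply,
      Matrix.kroneckerMap_apply, Matrix.one_apply]
    have h1 : ∀ f : Λ → Fin 2, ((Equiv.piEquivPiSubtypeProd (· ∈ S) fun _ => Fin 2) (fsFlip x f)).1
        = ((Equiv.piEquivPiSubtypeProd (· ∈ S) fun _ => Fin 2) f).1 := by
      intro f
      ext ⟨y, hy⟩
      have : y ≠ x := fun e => hx (e ▸ hy)
      simp [fsFlip_apply, Equiv.piEquivPiSubtypeProd, this]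
    have h2 : ((Equiv.piEquivPiSubtypeProd (· ∈ S) fun _ => Fin 2) (fsFlip x f)).2
        = ((Equiv.piEquivPiSubtypeProd (· ∈ S) fun _ => Fin 2) (fsFlip x g)).2 ↔
        ((Equiv.piEquivPiSubtypeProd (· ∈ S) fun _ => Fin 2) f).2
        = ((Equiv.piEquivPiSubtypeProd (· ∈ S) fun _ => Fin 2) g).2 := by
      simp only [funext_iff]
      refine forall_congr' fun y => ?_
      simp only [fsFlip_apply, Equiv.piEquivPiSubtypeProd, Equiv.coe_fn_mk]
      by_cases hy : (y : Λ) = x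
      · rw [hy]; simp
      · simp [hy]
    rw [h1, h1]
    simp only [h2]

lemma fs_traceless {Λ : Type*} [Fintype Λ] [DecidableEq Λ]
    {A : Matrix (Λ → Fin 2) (Λ → Fin 2) ℂ} {x : Λ} (h : TracelessAt x A) :
    fsTl (fsFlip x) (fun f => f x) A := by
  intro f g hfg
  have h1 := h f g
  simp only at hfg
  rw [fsFlip_apply, fsFlip_apply]
  rw [Fin.sum_univ_two] at h1
  have hf : Function.update f x (f x) = f := Function.update_eq_self x f
  have hg : Function.update g x (g x) = g := Function.update_eq_self x g
  rw [← hfg] at hg ⊢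
  have : f x = 0 ∨ f x = 1 := by generalize f x = v; revert v; decide
  rcases this with h0 | h0
  · rw [h0] at hf hg ⊢
    rw [hf, hg] at h1
    exact h1
  · rw [h0] at hf hg ⊢
    rw [hf, hg] at h1
    rw [add_comm]
    exact h1

open Matrix in
lemma fs_moment {Λ : Type*} [Fintype Λ] [LinearOrder Λ]
    (Hij : Λ → Λ → Matrix (Λ → Fin 2) (Λ → Fin 2) ℂ)
    (hsupp : ∀ i j : Λ, i < j → ∀ x, x ≠ i → x ≠ j → fsIndep (fsFlip x) (fun f => f x) (Hij i j))
    (htri : ∀ i j : Λ, i < j → fsTl (fsFlip i) (fun f => f i) (Hij i j))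
    (htrj : ∀ i j : Λ, i < j → fsTl (fsFlip j) (fun f => f j) (Hij i j))
    (H : Matrix (Λ → Fin 2) (Λ → Fin 2) ℂ)
    (hH : H = ∑ p ∈ Finset.univ.filter (fun p : Λ × Λ => p.1 < p.2), Hij p.1 p.2) (q : ℕ) :
    fsN (q + 1) (fsDil H) ≤ (2 * q + 1) ^ 2 *
      ∑ p ∈ Finset.univ.filter (fun p : Λ × Λ => p.1 < p.2), fsN (q + 1) (fsDil (Hij p.1 p.2)) := by
  set P := Finset.univ.filter (fun p : Λ × Λ => p.1 < p.2) with hP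
  let pr : Λ × Λ → Finset Λ := fun p => {p.1, p.2}
  let A : Finset Λ → Matrix ((Λ → Fin 2) ⊕ (Λ → Fin 2)) ((Λ → Fin 2) ⊕ (Λ → Fin 2)) ℂ :=
    fun S => ∑ p ∈ P with pr p = S, fsDil (Hij p.1 p.2)
  have hPlt : ∀ p ∈ P, p.1 < p.2 := fun p hp => (Finset.mem_filter.1 hp).2
  have hfib : ∀ S, ∀ p ∈ P.filter (fun p => pr p = S), p.1 < p.2 ∧ pr p = S := fun S p hp =>
    ⟨hPlt p (Finset.mem_filter.1 hp).1, (Finset.mem_filter.1 hp).2⟩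
  have key := fs_hyper (fun x => Equiv.sumCongr (fsFlip x) (fsFlip x))
    (fun x : Λ => Sum.elim (fun f : Λ → Fin 2 => f x) (fun f : Λ → Fin 2 => f x)) q Finset.univ A
    (fun S => fs_herm_sum _ fun p _ => fsDil_herm _)
    (fun S _ x _ hxS => fsIndep.sum _ fun p hp => by
      obtain ⟨hlt, rfl⟩ := hfib S p hp
      simp only [pr, Finset.mem_insert, Finset.mem_singleton, not_or] at hxS
      exact fs_dil_indep (hsupp _ _ hlt x hxS.1 hxS.2))
    (fun S _ x hxS => fsTl.sum _ fun p hp => by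
      obtain ⟨hlt, rfl⟩ := hfib S p hp
      simp only [pr, Finset.mem_insert, Finset.mem_singleton] at hxS
      rcases hxS with rfl | rfl
      · exact fs_dil_tl (htri _ _ hlt)
      · exact fs_dil_tl (htrj _ _ hlt))
  rw [Finset.powerset_univ] at key
  have e1 : ∑ S, A S = fsDil H := by
    rw [hH, fsDil_sum]
    exact Finset.sum_fiberwise P pr _
  rw [e1] at key
  refine key.trans ?_
  rw [Finset.mul_sum, ← Finset.sum_fiberwise P pr]
  refine Finset.sum_le_sum fun S _ => ?_
  rcases (P.filter (fun p => pr p = S)).eq_empty_or_nonempty with h0 | ⟨p, hp⟩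
  · simp only [A, h0, Finset.sum_empty]
    rw [fsN_zero, mul_zero]
  · have hs : P.filter (fun p => pr p = S) = {p} := by
      refine Finset.eq_singleton_iff_unique_mem.2 ⟨hp, fun p' hp' => ?_⟩
      obtain ⟨hlt, hS⟩ := hfib S p hp
      obtain ⟨hlt', hS'⟩ := hfib S p' hp'
      have h1 : p'.1 ∈ pr p := by rw [hS, ← hS']; simp [pr]
      have h2 : p'.2 ∈ pr p := by rw [hS, ← hS']; simp [pr]
      simp only [pr, Finset.mem_insert, Finset.mem_singleton] at h1 h2
      rcases h1 with h1 | h1 <;> rcases h2 with h2 | h2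
      · rw [h1, h2] at hlt'; exact absurd hlt' (lt_irrefl _)
      · exact Prod.ext h1 h2
      · rw [h1, h2] at hlt'; exact absurd hlt' (lt_asymm hlt)
      · rw [h1, h2] at hlt'; exact absurd hlt' (lt_irrefl _)
    simp only [A, hs, Finset.sum_singleton]
    obtain ⟨hlt, hS⟩ := hfib S p hp
    rw [← hS, Finset.card_pair hlt.ne]

lemma fs_num {F S L X : ℝ} (hF : 0 < F) (hS : 0 ≤ S) (hL : L = |Real.log F|)
    (hX : X ≤ (F ^ 2) ^ (1 - ((⌊L⌋₊ + 1 : ℕ) : ℝ)⁻¹) * ((2 * (⌊L⌋₊ : ℝ) + 1) ^ 2 * S)) :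
    √X ≤ 2 * Real.exp 1 * √S * F * (L + 1) := by
  have hL0 : 0 ≤ L := hL ▸ abs_nonneg _
  have h1 : (⌊L⌋₊ : ℝ) ≤ L := Nat.floor_le hL0
  have h2 : L ≤ ((⌊L⌋₊ + 1 : ℕ) : ℝ) := by push_cast; exact (Nat.lt_floor_add_one L).le
  have hm : (0 : ℝ) < ((⌊L⌋₊ + 1 : ℕ) : ℝ) := by positivity
  generalize ((⌊L⌋₊ + 1 : ℕ) : ℝ) = m at *
  have h3 : (F ^ 2) ^ (1 - m⁻¹) ≤ F ^ 2 * Real.exp 1 ^ 2 := by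
    rw [sub_eq_add_neg, Real.rpow_add (by positivity), Real.rpow_one]
    refine mul_le_mul_of_nonneg_left ?_ (by positivity)
    rw [Real.rpow_def_of_pos (by positivity), ← Real.exp_nat_mul]
    apply Real.exp_le_exp.2
    rw [Real.log_pow]
    have : -Real.log F ≤ m := (neg_le_abs _).trans (hL ▸ h2)
    have h5 : -Real.log F * m⁻¹ ≤ 1 := by
      rw [← div_eq_mul_inv, div_le_one hm]; exact this
    push_cast
    nlinarith
  rw [Real.sqrt_le_left (by positivity)]
  refine hX.trans ?_
  have h6 : (2 * (⌊L⌋₊ : ℝ) + 1) ^ 2 * S ≤ (2 * (L + 1)) ^ 2 * S := by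
    refine mul_le_mul_of_nonneg_right (pow_le_pow_left₀ (by positivity) (by linarith) 2) hS
  refine (mul_le_mul h3 h6 (by positivity) (by positivity)).trans (le_of_eq ?_)
  have := Real.sq_sqrt hS
  calc F ^ 2 * Real.exp 1 ^ 2 * ((2 * (L + 1)) ^ 2 * S)
      = F ^ 2 * Real.exp 1 ^ 2 * ((2 * (L + 1)) ^ 2 * √S ^ 2) := by rw [this]
    _ = _ := by ring

open Matrix in
lemma fs_dil_le {n : Type*} [Fintype n] [DecidableEq n] (h : Matrix n n ℂ) (q : ℕ) :
    fsN (q + 1) (fsDil h) ≤ (2 * Fintype.card n : ℝ) ^ (((q + 1 : ℕ) : ℝ)⁻¹) * opNorm h ^ 2 := by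
  have h0 := fs_even_nonneg (fsDil_herm h) (q + 1)
  have h1 : ((fsDil h) ^ (2 * (q + 1))).trace.re
      ≤ 2 * Fintype.card n * (opNorm h ^ 2) ^ (q + 1) := by
    rw [fsDil_trace]
    linarith [fs_op_moment h (q + 1)]
  refine (Real.rpow_le_rpow h0 h1 (by positivity)).trans (le_of_eq ?_)
  rw [Real.mul_rpow (by positivity) (by positivity),
    Real.pow_rpow_inv_natCast (by positivity) (by omega)]

lemma fs_main
    {Λ : Type*} [Fintype Λ] [LinearOrder Λ]
    (Hij : Λ → Λ → Matrix (Λ → Fin 2) (Λ → Fin 2) ℂ)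
    (hsupp : ∀ i j : Λ, i < j → ∀ x, x ≠ i → x ≠ j → fsIndep (fsFlip x) (fun f => f x) (Hij i j))
    (htri : ∀ i j : Λ, i < j → fsTl (fsFlip i) (fun f => f i) (Hij i j))
    (htrj : ∀ i j : Λ, i < j → fsTl (fsFlip j) (fun f => f j) (Hij i j))
    (H : Matrix (Λ → Fin 2) (Λ → Fin 2) ℂ)
    (hH : H = ∑ p ∈ Finset.univ.filter (fun p : Λ × Λ => p.1 < p.2), Hij p.1 p.2)
    (O : Matrix (Λ → Fin 2) (Λ → Fin 2) ℂ) (hO : O ≠ 0) (hOnorm : opNorm O ≤ 1) :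
    fnorm (H * O) ≤
      2 * Real.exp 1 *
        Real.sqrt (∑ p ∈ Finset.univ.filter (fun p : Λ × Λ => p.1 < p.2),
          opNorm (Hij p.1 p.2) ^ 2) *
        fnorm O * (|Real.log (fnorm O)| + 1) := by
  have hD : (0 : ℝ) < Fintype.card (Λ → Fin 2) := by exact_mod_cast Fintype.card_pos
  have hOt : 0 < (Oᴴ * O).trace.re := by
    have h1 := fs_even_pos (fsDil_herm O) (fun h => hO (by
      ext a b
      have := congrFun (congrFun h (Sum.inl a)) (Sum.inr b)
      simpa [fsDil] using this)) 1
    rw [fsDil_trace, pow_one] at h1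
    linarith
  have hF : 0 < fnorm O := Real.sqrt_pos.2 (div_pos hOt hD)
  have hF2 : fnorm O ^ 2 * Fintype.card (Λ → Fin 2) = (Oᴴ * O).trace.re := by
    rw [fnorm, Real.sq_sqrt (div_pos hOt hD).le, div_mul_cancel₀ _ hD.ne']
  rw [fnorm]
  refine fs_num hF (Finset.sum_nonneg fun p _ => sq_nonneg _) rfl ?_
  generalize ⌊|Real.log (fnorm O)|⌋₊ = q
  set S := ∑ p ∈ Finset.univ.filter (fun p : Λ × Λ => p.1 < p.2), opNorm (Hij p.1 p.2) ^ 2 with hS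
  have h1 := fs_final H O hOnorm (q + 1) (by omega)
  have h2 := fs_moment Hij hsupp htri htrj H hH q
  have h3 : fsN (q + 1) (fsDil H) ≤ (2 * q + 1) ^ 2 *
      ((2 * Fintype.card (Λ → Fin 2) : ℝ) ^ (((q + 1 : ℕ) : ℝ)⁻¹) * S) := by
    have e : ∀ h : Matrix (Λ → Fin 2) (Λ → Fin 2) ℂ, fsN (q + 1) (fsDil h) ≤
      (2 * Fintype.card (Λ → Fin 2) : ℝ) ^ (((q + 1 : ℕ) : ℝ)⁻¹) * opNorm h ^ 2 :=
      fun h => fs_dil_le h q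
    rw [hS, Finset.mul_sum]
    refine le_trans ?_ (mul_le_mul_of_nonneg_left (Finset.sum_le_sum fun p _ => e _)
      (by positivity))
    exact h2
  set s : ℝ := ((q + 1 : ℕ) : ℝ)⁻¹ with hs
  have ht0 : 0 ≤ ((Hᴴ * H) ^ (q + 1)).trace.re := by
    have := fs_even_nonneg (fsDil_herm H) (q + 1)
    rw [fsDil_trace] at this
    linarith
  have h4 : ((Hᴴ * H) ^ (q + 1)).trace.re ^ s ≤
      (2 * q + 1) ^ 2 * ((Fintype.card (Λ → Fin 2) : ℝ) ^ s * S) := by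
    rw [fsN, fsDil_trace, ← hs, Real.mul_rpow (by norm_num) ht0,
      Real.mul_rpow (by norm_num) hD.le] at h3
    have h2s : (0 : ℝ) < 2 ^ s := by positivity
    refine le_of_mul_le_mul_left (h3.trans (le_of_eq ?_)) h2s
    ring
  rw [div_le_iff₀ hD]
  refine h1.trans ?_
  rw [← hF2]
  refine (mul_le_mul_of_nonneg_left h4 (by positivity)).trans (le_of_eq ?_)
  rw [Real.mul_rpow (by positivity) hD.le]
  have : (Fintype.card (Λ → Fin 2) : ℝ) ^ (1 - s) * (Fintype.card (Λ → Fin 2) : ℝ) ^ s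
      = Fintype.card (Λ → Fin 2) := by
    rw [← Real.rpow_add hD]; simp
  calc _ = (fnorm O ^ 2) ^ (1 - s) * ((2 * q + 1) ^ 2 * S) *
      ((Fintype.card (Λ → Fin 2) : ℝ) ^ (1 - s) * (Fintype.card (Λ → Fin 2) : ℝ) ^ s) := by ring
    _ = _ := by rw [this]

/-- **Lemma 1 (approximate submultiplicativity of the Frobenius norm).**
For a 2-local Hamiltonian `H = ∑_{i<j} H_{ij}`, with each `H_{ij}` supported exactly on the
sites `{i,j}` (acting as the identity elsewhere, with vanishing partial trace over each of
`i` and `j`), and any operator `O ≠ 0` with `‖O‖_∞ ≤ 1`,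
`‖HO‖_F ≤ 2e·‖H‖_(2)·‖O‖_F·(|ln ‖O‖_F| + 1)` where `‖H‖_(2) = √(∑_{i<j} ‖H_{ij}‖_∞²)`. -/
theorem frobenius_submultiplicativity
    {Λ : Type*} [Fintype Λ] [DecidableEq Λ] [LinearOrder Λ]
    (Hij : Λ → Λ → Matrix (Λ → Fin 2) (Λ → Fin 2) ℂ)
    (hsupp : ∀ i j : Λ, i < j → SupportedOn {i, j} (Hij i j))
    (htri : ∀ i j : Λ, i < j → TracelessAt i (Hij i j))
    (htrj : ∀ i j : Λ, i < j → TracelessAt j (Hij i j))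
    (H : Matrix (Λ → Fin 2) (Λ → Fin 2) ℂ)
    (hH : H = ∑ p ∈ Finset.univ.filter (fun p : Λ × Λ => p.1 < p.2), Hij p.1 p.2)
    (O : Matrix (Λ → Fin 2) (Λ → Fin 2) ℂ) (hO : O ≠ 0) (hOnorm : opNorm O ≤ 1) :
    fnorm (H * O) ≤
      2 * Real.exp 1 *
        Real.sqrt (∑ p ∈ Finset.univ.filter (fun p : Λ × Λ => p.1 < p.2),
          opNorm (Hij p.1 p.2) ^ 2) *
        fnorm O * (|Real.log (fnorm O)| + 1) := by
  rename_i i1 i2 i3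
  have hd : i2 = i3.toDecidableEq := Subsingleton.elim _ _
  subst hd
  refine fs_main Hij (fun i j hij x hi hj => fs_supp (hsupp i j hij) ?_)
    (fun i j hij => fs_traceless (htri i j hij)) (fun i j hij => fs_traceless (htrj i j hij))
    H hH O hO hOnorm
  simp [hi, hj]
end

section
/- Let G ⊂ U(2) be the 48-element group G = {±1, (±1 ± iσ_a)/√2, ±iσ_a, (±iσ_a ± iσ_b)/√2 with a ≠ b, (±1 ± iσ₁ ± iσ₂ ± iσ₃)/2}, where σ₁,σ₂,σ₃ are the Pauli matrices and a,b range over {1,2,3}. Then: (i) for each a ∈ {1,2,3}, ∑_{D∈G} D† σ_a D = 0; and (ii) for all a,b ∈ {1,2,3}, (1/48)·∑_{D∈G} (D† σ_a D) ⊗ (D† σ_b D) = δ_{ab} · (1/3)·∑_{c=1}^3 σ_c ⊗ σ_c, where ⊗ denotes the Kronecker product of 2×2 complex matrices. -/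
open scoped Kronecker Matrix

noncomputable section

/-- The three Pauli matrices `σ₁ = X`, `σ₂ = Y`, `σ₃ = Z`. -/
def pauli : Fin 3 → Matrix (Fin 2) (Fin 2) ℂ := fun a =>
  if a = 0 then !![0, 1; 1, 0]
  else if a = 1 then !![0, -Complex.I; Complex.I, 0]
  else !![1, 0; 0, -1]

/-- The two signs `±1`. -/
def signs : List ℂ := [1, -1]

/-- The 48-element group
`G = {±1, (±1 ± iσ_a)/√2, ±iσ_a, (±iσ_a ± iσ_b)/√2 (a ≠ b), (±1 ± iσ₁ ± iσ₂ ± iσ₃)/2}`,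
enumerated as a list of forty-eight 2×2 unitary matrices. -/
def Glist : List (Matrix (Fin 2) (Fin 2) ℂ) :=
  (signs.map fun ε => ε • (1 : Matrix (Fin 2) (Fin 2) ℂ)) ++
  ((List.finRange 3).flatMap fun a => signs.flatMap fun ε₀ => signs.map fun ε₁ =>
    ((Real.sqrt 2 : ℂ))⁻¹ • (ε₀ • (1 : Matrix (Fin 2) (Fin 2) ℂ)
      + (ε₁ * Complex.I) • pauli a)) ++
  ((List.finRange 3).flatMap fun a => signs.map fun ε =>
    (ε * Complex.I) • pauli a) ++
  (([((0 : Fin 3), (1 : Fin 3)), (0, 2), (1, 2)]).flatMap fun ab =>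
    signs.flatMap fun ε₀ => signs.map fun ε₁ =>
      ((Real.sqrt 2 : ℂ))⁻¹ • ((ε₀ * Complex.I) • pauli ab.1 + (ε₁ * Complex.I) • pauli ab.2)) ++
  (signs.flatMap fun ε₀ => signs.flatMap fun ε₁ => signs.flatMap fun ε₂ =>
    signs.map fun ε₃ =>
      ((2 : ℂ))⁻¹ • (ε₀ • (1 : Matrix (Fin 2) (Fin 2) ℂ) + (ε₁ * Complex.I) • pauli 0
        + (ε₂ * Complex.I) • pauli 1 + (ε₃ * Complex.I) • pauli 2))

def sgZ : List ℤ := [1, -1]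

/-- Integer data `(k, w, x, y, z)` of the group elements. -/
def qlist : List (ℕ × ℤ × ℤ × ℤ × ℤ) :=
  (sgZ.map fun e => (4, e, 0, 0, 0)) ++
  ((sgZ.flatMap fun e => sgZ.map fun f => (2, e, f, 0, 0)) ++
   (sgZ.flatMap fun e => sgZ.map fun f => (2, e, 0, f, 0)) ++
   (sgZ.flatMap fun e => sgZ.map fun f => (2, e, 0, 0, f))) ++
  ((sgZ.map fun e => (4, 0, e, 0, 0)) ++ (sgZ.map fun e => (4, 0, 0, e, 0)) ++
   (sgZ.map fun e => (4, 0, 0, 0, e))) ++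
  ((sgZ.flatMap fun e => sgZ.map fun f => (2, 0, e, f, 0)) ++
   (sgZ.flatMap fun e => sgZ.map fun f => (2, 0, e, 0, f)) ++
   (sgZ.flatMap fun e => sgZ.map fun f => (2, 0, 0, e, f))) ++
  (sgZ.flatMap fun e => sgZ.flatMap fun f => sgZ.flatMap fun g => sgZ.map fun h => (1, e, f, g, h))

def qmat (q : ℕ × ℤ × ℤ × ℤ × ℤ) : Matrix (Fin 2) (Fin 2) ℂ :=
  ((Real.sqrt q.1 / 2 : ℝ) : ℂ) • ((q.2.1 : ℂ) • (1 : Matrix (Fin 2) (Fin 2) ℂ)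
    + ((q.2.2.1 : ℂ) * Complex.I) • pauli 0 + ((q.2.2.2.1 : ℂ) * Complex.I) • pauli 1
    + ((q.2.2.2.2 : ℂ) * Complex.I) • pauli 2)

/-- Four times the rotation matrix. -/
def rot : ℕ × ℤ × ℤ × ℤ × ℤ → Fin 3 → Fin 3 → ℤ
  | (k, w, x, y, z), a, c => k * (!![w*w+x*x-y*y-z*z, 2*x*y+2*w*z, 2*x*z-2*w*y;
      2*x*y-2*w*z, w*w-x*x+y*y-z*z, 2*y*z+2*w*x;
      2*x*z+2*w*y, 2*y*z-2*w*x, w*w-x*x-y*y+z*z] : Matrix (Fin 3) (Fin 3) ℤ) a c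

lemma Glist_eq : Glist = qlist.map qmat := by
  have h4 : Real.sqrt 4 = 2 := by
    rw [show (4:ℝ) = 2 ^ 2 by norm_num]; exact Real.sqrt_sq (by norm_num)
  have h2 : ((Real.sqrt 2 : ℝ) : ℂ) / 2 = ((Real.sqrt 2 : ℝ) : ℂ)⁻¹ := by
    rw [← Complex.ofReal_inv, ← Real.sqrt_div_self]; push_cast; rfl
  simp [Glist, qlist, signs, sgZ, qmat, List.finRange_succ, h4, h2]

lemma conj_eq (q : ℕ × ℤ × ℤ × ℤ × ℤ) (a : Fin 3) :
    (qmat q)ᴴ * pauli a * qmat q = (4 : ℂ)⁻¹ • ∑ c, (rot q a c : ℂ) • pauli c := by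
  obtain ⟨k, w, x, y, z⟩ := q
  have hk : ((Real.sqrt k : ℝ) : ℂ) ^ 2 = k := by
    rw [← Complex.ofReal_pow, Real.sq_sqrt (by positivity)]; simp
  have hI : Complex.I ^ 2 = -1 := Complex.I_sq
  simp only [qmat, rot, Matrix.conjTranspose_smul, Matrix.smul_mul, Matrix.mul_smul, smul_smul]
  have hs : star (((Real.sqrt k / 2 : ℝ)) : ℂ) = ((Real.sqrt k / 2 : ℝ) : ℂ) := Complex.conj_ofReal _
  have hss : ((Real.sqrt k / 2 : ℝ) : ℂ) * ((Real.sqrt k / 2 : ℝ) : ℂ) = 4⁻¹ * k := by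
    push_cast; linear_combination hk / 4
  rw [hs, hss, mul_smul]
  congr 1
  ext i j
  fin_cases a <;> fin_cases i <;> fin_cases j <;>
    simp [pauli, Fin.sum_univ_three, Matrix.mul_apply, Fin.sum_univ_two] <;> grind

lemma sum_rot (a c : Fin 3) : (qlist.map fun q => rot q a c).sum = 0 := by
  revert a c; decide +kernel

lemma sum_rot2 (a b c d : Fin 3) : (qlist.map fun q => rot q a c * rot q b d).sum =
    if a = b ∧ c = d then 256 else 0 := by
  revert a b c d; decide +kernel

lemma sum_smul_list {ι M : Type*} [AddCommGroup M] [Module ℂ M] (l : List ι) (f : ι → ℤ) (m : M) :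
    (l.map fun q => ((f q : ℤ) : ℂ) • m).sum = (((l.map f).sum : ℤ) : ℂ) • m := by
  induction l with
  | nil => simp
  | cons x l ih => simp [ih, add_smul]

lemma sum_comm_list {ι κ M : Type*} [AddCommGroup M] [Fintype κ] (l : List ι) (f : ι → κ → M) :
    (l.map fun q => ∑ c, f q c).sum = ∑ c, (l.map fun q => f q c).sum := by
  induction l with
  | nil => simp
  | cons x l ih => simp [ih, Finset.sum_add_distrib]

lemma kron_eq (r s : Fin 3 → ℤ) :
    ((4 : ℂ)⁻¹ • ∑ c, (r c : ℂ) • pauli c) ⊗ₖ ((4 : ℂ)⁻¹ • ∑ c, (s c : ℂ) • pauli c)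
    = (16 : ℂ)⁻¹ • ∑ c, ∑ d, ((r c * s d : ℤ) : ℂ) • (pauli c ⊗ₖ pauli d) := by
  ext i j
  simp [Fin.sum_univ_three, Matrix.kroneckerMap_apply, Matrix.add_apply, Matrix.smul_apply]
  ring

lemma List.sum_map_smul_aux {ι M : Type*} [AddCommGroup M] [Module ℂ M] (l : List ι) (k : ℂ)
    (f : ι → M) : (l.map fun q => k • f q).sum = k • (l.map f).sum := by
  induction l with
  | nil => simp
  | cons x l ih => simp [ih]

/-- **Proposition (depolarization by the 48-element single-qubit group `G`).**
(i) `∑_{D∈G} D†σ_aD = 0` for each Pauli `σ_a`; and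
(ii) `(1/48)·∑_{D∈G} (D†σ_aD) ⊗ (D†σ_bD) = δ_{ab}·(1/3)·∑_c σ_c ⊗ σ_c`. -/
theorem depolarizing_group_average :
    (∀ a : Fin 3, (Glist.map fun D => Dᴴ * pauli a * D).sum = 0) ∧
    (∀ a b : Fin 3,
      ((48 : ℂ))⁻¹ • (Glist.map fun D => (Dᴴ * pauli a * D) ⊗ₖ (Dᴴ * pauli b * D)).sum =
        (if a = b then (1 : ℂ) else 0) •
          ((3 : ℂ))⁻¹ • ∑ c : Fin 3, pauli c ⊗ₖ pauli c) := by
  constructor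
  · intro a
    rw [Glist_eq, List.map_map]
    simp only [Function.comp_def, conj_eq]
    rw [List.sum_map_smul_aux]
    rw [sum_comm_list]
    simp [sum_smul_list, sum_rot]
  · intro a b
    rw [Glist_eq, List.map_map]
    simp only [Function.comp_def, conj_eq, kron_eq]
    rw [List.sum_map_smul_aux]
    rw [sum_comm_list]
    simp only [sum_comm_list, sum_smul_list, sum_rot2]
    by_cases h : a = b
    · simp [h, smul_smul, ← Finset.smul_sum]
      norm_num
    · simp [h]


end
end

section
/- For all natural numbers N and k: ∑_{r=0}^{k} ∑_{p=0}^{r} (−1)^{r−p} · (N+k)! / ((k−r)! · (r−p)! · (N+p)!) = 1. -/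
lemma aux_inner (m : ℕ) :
    ∑ j ∈ Finset.range (m + 1), (-1 : ℝ) ^ j / ((Nat.factorial (m - j)) * (Nat.factorial j))
      = if m = 0 then 1 else 0 := by
  have h := congrArg (Int.cast : ℤ → ℝ) (Int.alternating_sum_range_choose (n := m))
  push_cast at h
  have h2 : ∑ j ∈ Finset.range (m + 1),
      (-1 : ℝ) ^ j / ((Nat.factorial (m - j)) * (Nat.factorial j))
      = (∑ j ∈ Finset.range (m + 1), (-1 : ℝ) ^ j * (m.choose j)) / (Nat.factorial m) := by
    rw [Finset.sum_div]
    refine Finset.sum_congr rfl fun j hj => ?_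
    have hj' : j ≤ m := by simpa [Nat.lt_succ_iff] using hj
    have e : ((m.choose j : ℕ) : ℝ) * (Nat.factorial j) * (Nat.factorial (m - j))
        = Nat.factorial m := by
      exact_mod_cast Nat.choose_mul_factorial_mul_factorial hj'
    have h1 := Nat.cast_ne_zero (R := ℝ).2 (Nat.factorial_ne_zero j)
    have h3 := Nat.cast_ne_zero (R := ℝ).2 (Nat.factorial_ne_zero (m - j))
    have h4 := Nat.cast_ne_zero (R := ℝ).2 (Nat.factorial_ne_zero m)
    rw [div_eq_div_iff (mul_ne_zero h3 h1) h4, ← e]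
    ring
  rw [h2, h]
  split_ifs with h0 <;> simp [h0]

/-- **Multinomial inclusion–exclusion identity.**  For all natural numbers `N` and `k`,
`∑_{r=0}^{k} ∑_{p=0}^{r} (−1)^{r−p}·(N+k)!/((k−r)!·(r−p)!·(N+p)!) = 1`. -/
theorem inclusion_exclusion_multinomial (N k : ℕ) :
    ∑ r ∈ Finset.range (k + 1), ∑ p ∈ Finset.range (r + 1),
      (-1 : ℝ) ^ (r - p) * (Nat.factorial (N + k)) /
        ((Nat.factorial (k - r)) * (Nat.factorial (r - p)) * (Nat.factorial (N + p))) = 1 := by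
  rw [Finset.sum_comm' (t' := Finset.range (k + 1)) (s' := fun p => Finset.Ico p (k + 1))
    (by intro x y; simp only [Finset.mem_range, Finset.mem_Ico]; omega)]
  have key : ∀ p ∈ Finset.range (k + 1), ∑ r ∈ Finset.Ico p (k + 1),
      (-1 : ℝ) ^ (r - p) * (Nat.factorial (N + k)) /
        ((Nat.factorial (k - r)) * (Nat.factorial (r - p)) * (Nat.factorial (N + p)))
      = if p = k then 1 else 0 := by
    intro p hp
    have hp' : p ≤ k := by simpa [Nat.lt_succ_iff] using hp
    have e : k + 1 - p = (k - p) + 1 := by omega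
    rw [Finset.sum_Ico_eq_sum_range, e]
    have h : ∀ j ∈ Finset.range (k - p + 1),
        (-1 : ℝ) ^ (p + j - p) * (Nat.factorial (N + k)) /
        ((Nat.factorial (k - (p + j))) * (Nat.factorial (p + j - p)) * (Nat.factorial (N + p)))
        = ((Nat.factorial (N + k)) / (Nat.factorial (N + p)) : ℝ) *
          ((-1 : ℝ) ^ j / ((Nat.factorial (k - p - j)) * (Nat.factorial j))) := by
      intro j _
      rw [Nat.add_sub_cancel_left, ← Nat.sub_sub, div_mul_div_comm]
      congr 1 <;> ring
    rw [Finset.sum_congr rfl h, ← Finset.mul_sum, aux_inner]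
    by_cases hk : p = k
    · subst hk
      simp [Nat.factorial_ne_zero]
    · have : k - p ≠ 0 := by omega
      simp [hk, this]
  rw [Finset.sum_congr rfl key]
  simp
end
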